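/- If G ∈ F_q^{m×n} is triorthogonal with parameter k and weights σ, τ, then for every f ∈ 𝒢 with f ∉ 𝒢_0, the vector m_σ(f) lies in 𝒢_0^⊥ but not in 𝒢^⊥ and has the same Hamming weight as f; consequently, whenever 𝒢 \ 𝒢_0 is nonempty, min{|f| : f ∈ 𝒢 \ 𝒢_0} ≥ min{|h| : h ∈ 𝒢_0^⊥ \ 𝒢^⊥} (i.e. the X-distance of the associated CSS code is at least its Z-distance). -/

import Mathlib

/-!
Consider the bilinear form `B(x, y) = ∑ i, σ i * x i * y i`. By (ii) the rows of `G` are pairwise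
`B`-orthogonal, so the radical of `B` on `𝒢` is spanned by the rows of `B`-norm zero, and these are
exactly the rows spanning `𝒢₀`. Since `m_σ` carries the `B`-orthogonal complement of a subspace to
its dual code, `f ∈ 𝒢 \ rad 𝒢` gives `m_σ f ∈ (rad 𝒢)^⊥ \ 𝒢^⊥`. As `σ` has no zero entry, `m_σ`
preserves Hamming weights.
-/

open scoped Classical

noncomputable section

/-- A matrix `G ∈ F^{m×n}` (rows `G a`) is *triorthogonal* with parameter `k`
and weights `σ : Fin n → F`, `τ : Fin k → F` (all nonzero) if
(i) `∑ i, (G a i)^4 (G b i)^2 (G c i)` is `1` when `a = b = c` is among the first `k`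
rows and `0` otherwise, and
(ii) `∑ i, σ i * G a i * G b i` is `τ a` when `a = b` is among the first `k` rows and
`0` otherwise. -/
def IsTriorthogonal {F : Type} [Field F] {m n k : ℕ} (G : Fin m → Fin n → F)
    (σ : Fin n → F) (τ : Fin k → F) : Prop :=
  (∀ i, σ i ≠ 0) ∧ (∀ a, τ a ≠ 0) ∧
  (∀ a b c : Fin m, ∑ i, (G a i) ^ 4 * (G b i) ^ 2 * (G c i) =
      if a = b ∧ b = c ∧ (a : ℕ) < k then 1 else 0) ∧
  (∀ a b : Fin m, ∑ i, σ i * G a i * G b i =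
      if h : a = b ∧ (a : ℕ) < k then τ ⟨(a : ℕ), h.2⟩ else 0)

/-- The dual code `V^⊥ = {x : ∑ i, x i * y i = 0 for all y ∈ V}`. -/
def dualCode {F : Type} [Field F] {n : ℕ} (V : Submodule F (Fin n → F)) :
    Submodule F (Fin n → F) where
  carrier := {x | ∀ y ∈ V, ∑ i, x i * y i = 0}
  add_mem' := by
    intro a b ha hb y hy
    calc ∑ i, (a + b) i * y i = (∑ i, a i * y i) + ∑ i, b i * y i := by
          rw [← Finset.sum_add_distrib]
          exact Finset.sum_congr rfl fun i _ => by simp [add_mul]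
      _ = 0 := by rw [ha y hy, hb y hy]; ring
  zero_mem' := by intro y hy; simp
  smul_mem' := by
    intro c a ha y hy
    calc ∑ i, (c • a) i * y i = c * ∑ i, a i * y i := by
          rw [Finset.mul_sum]
          exact Finset.sum_congr rfl fun i _ => by simp [mul_assoc]
      _ = 0 := by rw [ha y hy]; ring

/-- Componentwise multiplication `m_w(v)_i = w i * v i` as a linear map. -/
def mulComp {F : Type} [Field F] {n : ℕ} (w : Fin n → F) :
    (Fin n → F) →ₗ[F] (Fin n → F) where
  toFun v := fun i => w i * v i
  map_add' a b := by funext i; simp [mul_add]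
  map_smul' c a := by
    funext i
    simp only [Pi.smul_apply, smul_eq_mul, RingHom.id_apply]
    ring

section Radical

variable {R M N ι : Type*} [CommSemiring R] [AddCommMonoid M] [AddCommMonoid N] [Module R M]
  [Module R N] {B : M →ₗ[R] M →ₗ[R] N} {v : ι → M}

/-- The right radical of the restriction of `B` to `V`: the vectors of `V` that are right orthogonal
to all of `V`. It is taken as a submodule of the ambient module `M` rather than of `V`, and plays
the role of `𝒢₀` inside `𝒢`. -/
def rightRadical (B : M →ₗ[R] M →ₗ[R] N) (V : Submodule R M) : Submodule R M :=
  V ⊓ V.orthogonalBilin B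

theorem apply_linearCombination_of_isOrthoᵢ (hv : B.IsOrthoᵢ v) (c : ι →₀ R) (i : ι) :
    B (v i) (Finsupp.linearCombination R v c) = c i • B (v i) (v i) := by
  simp only [Finsupp.linearCombination_apply, map_finsuppSum, map_smul]
  refine Finsupp.sum_eq_single i (fun j _ hj => ?_) fun _ => zero_smul R _
  rw [LinearMap.isOrthoᵢ_def.1 hv i j hj.symm, smul_zero]

theorem apply_eq_zero_of_mem_span_range (hv : B.IsOrthoᵢ v) {i : ι} (hi : B (v i) (v i) = 0)
    {x : M} (hx : x ∈ Submodule.span R (Set.range v)) : B x (v i) = 0 := by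
  suffices Submodule.span R (Set.range v) ≤ (B.flip (v i)).ker from this hx
  rw [Submodule.span_le]
  rintro _ ⟨j, rfl⟩
  obtain rfl | hij := eq_or_ne j i
  · exact hi
  · exact LinearMap.isOrthoᵢ_def.1 hv j i hij

theorem rightRadical_span_range_of_isOrthoᵢ [IsDomain R] [Module.IsTorsionFree R N]
    (hv : B.IsOrthoᵢ v) :
    rightRadical B (Submodule.span R (Set.range v)) =
      Submodule.span R (v '' {i | B (v i) (v i) = 0}) := by
  apply le_antisymm
  · rintro x ⟨hx, hx_orth⟩
    obtain ⟨c, rfl⟩ := Finsupp.mem_span_range_iff_exists_finsupp.1 hx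
    refine Submodule.sum_mem _ fun i _ => ?_
    have hc : c i • B (v i) (v i) = 0 := by
      rw [← apply_linearCombination_of_isOrthoᵢ hv]
      exact hx_orth (v i) (Submodule.subset_span ⟨i, rfl⟩)
    obtain hci | hi := smul_eq_zero.1 hc
    · simp only [hci, zero_smul, zero_mem]
    · exact Submodule.smul_mem _ _ (Submodule.subset_span ⟨i, hi, rfl⟩)
  · rw [Submodule.span_le]
    rintro _ ⟨i, hi, rfl⟩
    exact ⟨Submodule.subset_span ⟨i, rfl⟩, fun x hx => apply_eq_zero_of_mem_span_range hv hi hx⟩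

theorem le_orthogonalBilin_rightRadical (hB : B.IsRefl) (V : Submodule R M) :
    V ≤ (rightRadical B V).orthogonalBilin B :=
  (Submodule.le_orthogonalBilin_orthogonalBilin hB).trans
    (Submodule.orthogonalBilin_le inf_le_right)

end Radical

section WeightedForm

variable {R ι : Type*} [CommSemiring R] [Fintype ι]

/-- The diagonal bilinear form `(x, y) ↦ ∑ i, w i * x i * y i` with weights `w`, encoded as the dot
product of the componentwise product `w * x` with `y`; for `w = σ` it is the form in condition (ii)
of triorthogonality. -/
def weightedForm (w : ι → R) : LinearMap.BilinForm R (ι → R) :=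
  dotProductBilin R R ∘ₗ LinearMap.mulLeft R w

theorem weightedForm_apply (w x y : ι → R) : weightedForm w x y = ∑ i, w i * x i * y i := by
  simp only [weightedForm, LinearMap.comp_apply, LinearMap.mulLeft_apply,
    dotProductBilin_apply_apply, dotProduct, Pi.mul_apply]

theorem weightedForm_isSymm (w : ι → R) : (weightedForm w).IsSymm where
  eq x y := by simp only [weightedForm_apply, mul_right_comm]

end WeightedForm

section DualCode

variable {F : Type} [Field F] {n : ℕ} {w f : Fin n → F} {V : Submodule F (Fin n → F)}

theorem mulComp_mem_dualCode_iff :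
    mulComp w f ∈ dualCode V ↔ f ∈ V.orthogonalBilin (weightedForm w) :=
  forall₂_congr fun y _ => by
    rw [(weightedForm_isSymm w).eq_iff, weightedForm_apply]
    rfl

theorem hammingNorm_mulComp (hw : ∀ i, w i ≠ 0) (f : Fin n → F) :
    hammingNorm (mulComp w f) = hammingNorm f :=
  hammingNorm_comp (fun i x => w i * x) (fun i => mul_right_injective₀ (hw i)) fun _ => mul_zero _

theorem mulComp_mem_dualCode_rightRadical (hf : f ∈ V) :
    mulComp w f ∈ dualCode (rightRadical (weightedForm w) V) :=
  mulComp_mem_dualCode_iff.2 <|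
    le_orthogonalBilin_rightRadical (weightedForm_isSymm w).isRefl V hf

theorem mulComp_notMem_dualCode (hf : f ∈ V) (hf_rad : f ∉ rightRadical (weightedForm w) V) :
    mulComp w f ∉ dualCode V :=
  fun h => hf_rad ⟨hf, mulComp_mem_dualCode_iff.1 h⟩

end DualCode

section Triorthogonal

variable {F : Type} [Field F] {m n k : ℕ} {G : Fin m → Fin n → F} {σ : Fin n → F} {τ : Fin k → F}

theorem IsTriorthogonal.isOrthoᵢ (hG : IsTriorthogonal G σ τ) : (weightedForm σ).IsOrthoᵢ G :=
  LinearMap.isOrthoᵢ_def.2 fun a b hab => by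
    rw [weightedForm_apply, hG.2.2.2 a b, dif_neg fun h => hab h.1]

theorem IsTriorthogonal.weightedForm_self_eq_zero_iff (hG : IsTriorthogonal G σ τ) (a : Fin m) :
    weightedForm σ (G a) (G a) = 0 ↔ k ≤ a := by
  rw [weightedForm_apply, hG.2.2.2 a a]
  split_ifs with h
  · exact iff_of_false (hG.2.1 _) h.2.not_ge
  · exact iff_of_true rfl (not_lt.1 fun ha => h ⟨rfl, ha⟩)

theorem range_apply_natAdd_eq_image {α : Type*} (v : Fin m → α) :
    (Set.range fun a : Fin (m - k) => v ⟨k + (a : ℕ), by have := a.2; omega⟩) =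
      v '' {a | k ≤ a} := by
  ext x
  constructor
  · rintro ⟨a, rfl⟩
    exact ⟨_, Nat.le_add_right k a, rfl⟩
  · rintro ⟨a, ha : k ≤ a, rfl⟩
    exact ⟨⟨a - k, Nat.sub_lt_sub_right ha a.2⟩, congrArg v (Fin.ext (Nat.add_sub_cancel' ha))⟩

theorem IsTriorthogonal.span_lastRows_eq_rightRadical (hG : IsTriorthogonal G σ τ) :
    Submodule.span F
        (Set.range fun a : Fin (m - k) => G ⟨k + (a : ℕ), by have := a.2; omega⟩) =
      rightRadical (weightedForm σ) (Submodule.span F (Set.range G)) := by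
  simp only [range_apply_natAdd_eq_image, rightRadical_span_range_of_isOrthoᵢ hG.isOrthoᵢ,
    hG.weightedForm_self_eq_zero_iff]

end Triorthogonal

theorem X_distance_ge_Z_distance_general {F : Type} [Field F] {n : ℕ} {σ : Fin n → F}
    (hσ : ∀ i, σ i ≠ 0) (V : Submodule F (Fin n → F)) :
    (∀ f : Fin n → F, f ∈ V → f ∉ rightRadical (weightedForm σ) V →
      mulComp σ f ∈ dualCode (rightRadical (weightedForm σ) V) ∧
        mulComp σ f ∉ dualCode V ∧
        hammingNorm (mulComp σ f) = hammingNorm f) ∧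
    ((∃ f : Fin n → F, f ∈ V ∧ f ∉ rightRadical (weightedForm σ) V) →
      sInf {d : ℕ | ∃ h : Fin n → F,
          h ∈ dualCode (rightRadical (weightedForm σ) V) ∧
          h ∉ dualCode V ∧ hammingNorm h = d} ≤
        sInf {d : ℕ | ∃ f : Fin n → F, f ∈ V ∧
          f ∉ rightRadical (weightedForm σ) V ∧ hammingNorm f = d}) := by
  constructor
  · exact fun f hf hf_rad => ⟨mulComp_mem_dualCode_rightRadical hf,
      mulComp_notMem_dualCode hf hf_rad, hammingNorm_mulComp hσ f⟩
  · rintro ⟨f, hf, hf_rad⟩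
    refine csInf_le_csInf' ⟨_, f, hf, hf_rad, rfl⟩ ?_
    rintro _ ⟨g, hg, hg_rad, rfl⟩
    exact ⟨mulComp σ g, mulComp_mem_dualCode_rightRadical hg,
      mulComp_notMem_dualCode hg hg_rad, hammingNorm_mulComp hσ g⟩

/-- For `G` triorthogonal with parameter `k` and weights `σ, τ`: every `f ∈ 𝒢 \\ 𝒢₀`
has `m_σ(f) ∈ 𝒢₀^⊥ \\ 𝒢^⊥` with the same Hamming weight; consequently, if `𝒢 \\ 𝒢₀`
is nonempty, the X-distance is at least the Z-distance of the associated CSS code. -/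
theorem X_distance_ge_Z_distance
    {s m n k : ℕ} (hs : 1 ≤ s) (hk : 1 ≤ k) (hkm : k ≤ m)
    {F : Type} [Field F] [Fintype F] (hF : Fintype.card F = 2 ^ s)
    (G : Fin m → Fin n → F) (σ : Fin n → F) (τ : Fin k → F)
    (hG : IsTriorthogonal G σ τ) :
    (∀ f : Fin n → F, f ∈ Submodule.span F (Set.range G) →
      f ∉ Submodule.span F (Set.range fun a : Fin (m - k) => G ⟨k + (a : ℕ), by have := a.2; omega⟩) →
      mulComp σ f ∈
          dualCode (Submodule.span F (Set.range fun a : Fin (m - k) => G ⟨k + (a : ℕ), by have := a.2; omega⟩)) ∧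
        mulComp σ f ∉ dualCode (Submodule.span F (Set.range G)) ∧
        hammingNorm (mulComp σ f) = hammingNorm f) ∧
    ((∃ f : Fin n → F, f ∈ Submodule.span F (Set.range G) ∧
        f ∉ Submodule.span F (Set.range fun a : Fin (m - k) => G ⟨k + (a : ℕ), by have := a.2; omega⟩)) →
      sInf {w : ℕ | ∃ h : Fin n → F,
          h ∈ dualCode (Submodule.span F (Set.range fun a : Fin (m - k) => G ⟨k + (a : ℕ), by have := a.2; omega⟩)) ∧
          h ∉ dualCode (Submodule.span F (Set.range G)) ∧ hammingNorm h = w} ≤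
        sInf {w : ℕ | ∃ f : Fin n → F, f ∈ Submodule.span F (Set.range G) ∧
          f ∉ Submodule.span F (Set.range fun a : Fin (m - k) => G ⟨k + (a : ℕ), by have := a.2; omega⟩) ∧
          hammingNorm f = w}) := by
  rw [hG.span_lastRows_eq_rightRadical]
  exact X_distance_ge_Z_distance_general hG.1 _
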